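/- For real z and τ > 0, the Mordell integral satisfies the modular-type transformation h(z, τ) = (1/√τ) e^{πi/4 + πi z²/τ} h(z/τ, −1/τ), where h(z, −σ) is defined as the complex conjugate of h(z, σ) for σ > 0. -/

import Mathlib

open Complex Real

/-- The Mordell integral for real `z` and `τ > 0`, defined via the rotated contour. -/
noncomputable def mordellH (z τ : ℝ) : ℂ :=
  2 * Complex.exp (Real.pi * Complex.I / 4) *
    ∫ y in Set.Ioi (0 : ℝ),
      Complex.exp (-(Real.pi * τ * y ^ 2)) *
        Complex.cosh (2 * Real.pi * z * Complex.exp (Real.pi * Complex.I / 4) * y) /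
          Complex.cosh (Real.pi * Complex.exp (Real.pi * Complex.I / 4) * y)

open MeasureTheory Filter Topology in
lemma shift_line (F : ℂ → ℂ) (a b : ℝ) (hab : a ≤ b)
    (hF : DifferentiableOn ℂ F {z | a ≤ z.im ∧ z.im ≤ b})
    (h1 : Integrable (fun x : ℝ => F (x + a * I)))
    (h2 : Integrable (fun x : ℝ => F (x + b * I)))
    (C R : ℝ) (hC : ∀ x : ℝ, R ≤ |x| → ∀ y : ℝ, a ≤ y → y ≤ b → ‖F (x + y * I)‖ ≤ C / |x|) :
    ∫ x : ℝ, F (x + a * I) = ∫ x : ℝ, F (x + b * I) := by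
  have t1 := intervalIntegral_tendsto_integral h1 tendsto_neg_atTop_atBot tendsto_id
  have t2 := intervalIntegral_tendsto_integral h2 tendsto_neg_atTop_atBot tendsto_id
  have hlim : Tendsto (fun T : ℝ => C / T * |b - a|) atTop (𝓝 0) := by
    simpa using (tendsto_const_nhds.div_atTop tendsto_id : Tendsto (fun T : ℝ => C / T) atTop (𝓝 0)).mul_const (|b - a|)
  have v1 : Tendsto (fun T : ℝ => ∫ y in a..b, F ((T : ℂ) + y * I)) atTop (𝓝 0) := by
    refine squeeze_zero_norm' ?_ hlim
    filter_upwards [eventually_ge_atTop R, eventually_gt_atTop 0] with T hT hT0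
    apply intervalIntegral.norm_integral_le_of_norm_le_const
    intro y hy
    rw [Set.uIoc_of_le hab] at hy
    simpa [abs_of_pos hT0] using hC T (by rwa [abs_of_pos hT0]) y hy.1.le hy.2
  have v2 : Tendsto (fun T : ℝ => ∫ y in a..b, F (((-T : ℝ) : ℂ) + y * I)) atTop (𝓝 0) := by
    refine squeeze_zero_norm' ?_ hlim
    filter_upwards [eventually_ge_atTop R, eventually_gt_atTop 0] with T hT hT0
    apply intervalIntegral.norm_integral_le_of_norm_le_const
    intro y hy
    rw [Set.uIoc_of_le hab] at hy
    simpa [abs_of_pos hT0] using hC (-T) (by rwa [abs_neg, abs_of_pos hT0]) y hy.1.le hy.2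
  have key : ∀ T : ℝ, (∫ x : ℝ in -T..T, F (x + a * I)) - (∫ x : ℝ in -T..T, F (x + b * I)) +
      I • (∫ y : ℝ in a..b, F ((T : ℂ) + y * I)) -
      I • (∫ y : ℝ in a..b, F (((-T : ℝ) : ℂ) + y * I)) = 0 := by
    intro T
    have := Complex.integral_boundary_rect_eq_zero_of_differentiableOn F (⟨-T, a⟩ : ℂ) (⟨T, b⟩ : ℂ) ?_
    · exact this
    · refine hF.mono ?_
      intro z hz
      rw [Complex.mem_reProdIm] at hz
      have := hz.2
      simp only [Set.uIcc_of_le hab] at this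
      exact this
  have t3 := ((t1.sub t2).add (v1.const_smul I)).sub (v2.const_smul I)
  have := tendsto_nhds_unique t3 (by simp only [id]; simp only [key]; exact tendsto_const_nhds)
  simpa [sub_eq_zero] using this

open MeasureTheory Filter Topology in
lemma integrable_inv_sq (b : ℝ) (hb : 0 < b) : Integrable (fun t : ℝ => (t^2 + b^2)⁻¹) := by
  have := (integrable_inv_one_add_sq.comp_div hb.ne').const_mul ((b^2)⁻¹)
  refine this.congr (Eventually.of_forall fun t => ?_)
  simp only
  field_simp
  ring

open MeasureTheory Filter Topology in
lemma k_lower (b : ℝ) (hb : 0 < b) :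
    Integrable (fun t : ℝ => 1 / ((t : ℂ) + (-b : ℝ) * I) - 1 / ((t : ℂ) + (-b : ℝ) * I + 2 * b * I)) ∧
    ∫ t : ℝ, (1 / ((t : ℂ) + (-b : ℝ) * I) - 1 / ((t : ℂ) + (-b : ℝ) * I + 2 * b * I)) = 2 * π * I := by
  have e : (fun t : ℝ => 1 / ((t : ℂ) + (-b : ℝ) * I) - 1 / ((t : ℂ) + (-b : ℝ) * I + 2 * b * I)) =
      fun t : ℝ => 2 * b * I * (((t^2 + b^2)⁻¹ : ℝ) : ℂ) := by
    funext t
    have n1 : (t : ℂ) + (-b : ℝ) * I ≠ 0 := fun h => by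
      have := congrArg Complex.im h; simp at this; exact hb.ne' this
    have n2 : (t : ℂ) + (-b : ℝ) * I + 2 * b * I ≠ 0 := fun h => by
      have := congrArg Complex.im h; simp at this; linarith
    have n3 : (t : ℂ)^2 + b^2 ≠ 0 := by
      have : t^2 + b^2 ≠ 0 := by positivity
      exact_mod_cast this
    push_cast at *
    rw [div_sub_div _ _ n1 n2, ← div_eq_mul_inv, div_eq_div_iff (mul_ne_zero n1 n2) n3]
    linear_combination (2 * b^3 * I) * I_sq
  have hi := integrable_inv_sq b hb
  constructor
  · rw [e]; exact (hi.ofReal).const_mul _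
  · rw [e, MeasureTheory.integral_const_mul, integral_complex_ofReal]
    have : ∫ t : ℝ, (t^2 + b^2)⁻¹ = π / b := by
      have h := MeasureTheory.Measure.integral_comp_div (fun x : ℝ => (1 + x^2)⁻¹) b
      rw [integral_univ_inv_one_add_sq, abs_of_pos hb] at h
      have e2 : (fun t : ℝ => (t^2 + b^2)⁻¹) = fun t => (b^2)⁻¹ * (1 + (t/b)^2)⁻¹ := by
        funext t; field_simp; ring
      rw [e2, MeasureTheory.integral_const_mul, h, smul_eq_mul]
      field_simp
    rw [this]
    have : (b : ℂ) ≠ 0 := by exact_mod_cast hb.ne'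
    push_cast; field_simp

open MeasureTheory Filter Topology in
lemma k_upper (b : ℝ) (hb : 0 < b) :
    Integrable (fun t : ℝ => 1 / ((t : ℂ) + (b : ℝ) * I) - 1 / ((t : ℂ) + (b : ℝ) * I + 2 * b * I)) ∧
    ∫ t : ℝ, (1 / ((t : ℂ) + (b : ℝ) * I) - 1 / ((t : ℂ) + (b : ℝ) * I + 2 * b * I)) = 0 := by
  have n1 : ∀ t : ℝ, (t : ℂ) + (b : ℝ) * I ≠ 0 := fun t h => by
    have := congrArg Complex.im h; simp at this; exact hb.ne' this
  have n2 : ∀ t : ℝ, (t : ℂ) + (b : ℝ) * I + 2 * b * I ≠ 0 := fun t h => by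
    have := congrArg Complex.im h; simp at this; linarith
  have hint : Integrable (fun t : ℝ => 1 / ((t : ℂ) + (b : ℝ) * I) - 1 / ((t : ℂ) + (b : ℝ) * I + 2 * b * I)) := by
    refine ((integrable_inv_sq b hb).const_mul (2 * b)).mono' ?_ ?_
    · apply Continuous.aestronglyMeasurable
      apply Continuous.sub
      · exact continuous_const.div (by fun_prop) n1
      · exact continuous_const.div (by fun_prop) n2
    · refine Eventually.of_forall fun t => ?_
      rw [div_sub_div _ _ (n1 t) (n2 t), norm_div, norm_mul]
      have e1 : ‖1 * ((t:ℂ) + b * I + 2 * b * I) - (t + b * I) * 1‖ = 2 * b := by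
        have : 1 * ((t:ℂ) + b * I + 2 * b * I) - (t + b * I) * 1 = ((2 * b : ℝ) : ℂ) * I := by
          push_cast; ring
        rw [this, norm_mul, norm_I, mul_one, Complex.norm_real, Real.norm_of_nonneg (by positivity)]
      rw [e1, div_eq_mul_inv]
      gcongr
      have a1 : ‖(t:ℂ) + b * I‖ = √(t^2+b^2) := Complex.norm_add_mul_I t b
      have a2 : ‖(t:ℂ) + b * I + 2 * b * I‖ = √(t^2+(3*b)^2) := by
        rw [← Complex.norm_add_mul_I t (3*b)]; congr 1; push_cast; ring
      rw [a1, a2]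
      calc t^2 + b^2 = √(t^2+b^2) * √(t^2+b^2) := (Real.mul_self_sqrt (by positivity)).symm
        _ ≤ _ := by gcongr; linarith
  refine ⟨hint, ?_⟩
  have lim : ∀ l : Filter ℝ, Tendsto (fun t : ℝ => |t|) l atTop →
      Tendsto (fun t : ℝ => Complex.log (1 - 2 * b * I / ((t : ℂ) + (b : ℝ) * I + 2 * b * I))) l (𝓝 0) := by
    intro l hl
    have h0 : Tendsto (fun t : ℝ => 1 - 2 * b * I / ((t : ℂ) + (b : ℝ) * I + 2 * b * I)) l (𝓝 (1 - 0)) := by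
      refine tendsto_const_nhds.sub ?_
      rw [tendsto_zero_iff_norm_tendsto_zero]
      simp only [norm_div]
      refine tendsto_const_nhds.div_atTop ?_
      refine tendsto_atTop_mono (fun t => ?_) hl
      have := Complex.abs_re_le_norm ((t : ℂ) + (b : ℝ) * I + 2 * b * I)
      simpa using this
    have := (continuousAt_clog (x := (1 - 0 : ℂ)) (by simp)).tendsto.comp h0
    simpa [Function.comp_def] using this
  have hd : ∀ t : ℝ, HasDerivAt (fun t : ℝ => Complex.log (1 - 2 * b * I / ((t : ℂ) + (b : ℝ) * I + 2 * b * I)))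
      (1 / ((t : ℂ) + (b : ℝ) * I) - 1 / ((t : ℂ) + (b : ℝ) * I + 2 * b * I)) t := by
    intro t
    have d1 : HasDerivAt (fun t : ℝ => (t : ℂ) + (b : ℝ) * I + 2 * b * I) 1 t :=
      ((Complex.ofRealCLM.hasDerivAt (x := t)).add_const _).add_const _
    have d2 := (((hasDerivAt_const t (2 * b * I : ℂ))).div d1 (n2 t)).const_sub 1
    have hs : (1 - 2 * b * I / ((t : ℂ) + (b : ℝ) * I + 2 * b * I)) ∈ slitPlane := by
      left
      have : (1 - 2 * b * I / ((t : ℂ) + (b : ℝ) * I + 2 * b * I)) =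
        (((t^2+3*b^2 : ℝ) : ℂ) + ((-2 * b * t : ℝ) : ℂ) * I) * (((t^2 + (3*b)^2)⁻¹ : ℝ) : ℂ) := by
        have n3 : (t : ℂ)^2 + (3*b)^2 ≠ 0 := by
          have : t^2 + (3*b)^2 ≠ 0 := by positivity
          exact_mod_cast this
        have := n2 t
        push_cast
        rw [← div_eq_mul_inv, one_sub_div this, div_eq_div_iff this n3]
        linear_combination (6 * t * b^2) * I_sq
      rw [this, Complex.re_mul_ofReal]
      have h1 : (((t^2+3*b^2 : ℝ) : ℂ) + ((-2 * b * t : ℝ) : ℂ) * I).re = t^2+3*b^2 := by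
        rw [Complex.add_re, Complex.re_ofReal_mul, Complex.ofReal_re, Complex.I_re]; ring
      rw [h1]
      positivity
    have d3 : HasDerivAt (fun t : ℝ => 1 - 2 * b * I / ((t : ℂ) + (b : ℝ) * I + 2 * b * I)) _ t := d2
    convert d3.clog_real hs using 1
    rw [one_sub_div (n2 t)]
    have q1 := n1 t
    have q2 := n2 t
    have e3 : (t : ℂ) + (b : ℝ) * I + 2 * b * I - 2 * b * I = t + b * I := by ring
    rw [e3]
    generalize hP : (t : ℂ) + (b : ℝ) * I + 2 * b * I = P at *
    generalize hQ : (t : ℂ) + (b : ℝ) * I = Q at *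
    have hPQ : P = Q + 2 * b * I := hP.symm
    have hne : Q + 2 * b * I ≠ 0 := hPQ ▸ q2
    rw [hPQ]
    field_simp
    ring
  rw [integral_of_hasDerivAt_of_tendsto hd hint (lim _ tendsto_abs_atBot_atTop) (lim _ tendsto_abs_atTop_atTop), sub_zero]

open MeasureTheory Filter Topology in
lemma residue_strip (Φ : ℂ → ℂ) (b : ℝ) (hb : 0 < b)
    (hΦ : DifferentiableOn ℂ Φ {z | -(2*b) < z.im ∧ z.im < 2*b})
    (h1 : Integrable (fun x : ℝ => Φ (x + (-b : ℝ) * I) / (x + (-b : ℝ) * I)))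
    (h2 : Integrable (fun x : ℝ => Φ (x + b * I) / (x + b * I)))
    (C R : ℝ) (hC : ∀ x : ℝ, R ≤ |x| → ∀ y : ℝ, -b ≤ y → y ≤ b →
      ‖Φ (x + y * I) / (x + y * I)‖ ≤ C / |x|) :
    ∫ x : ℝ, Φ (x + (-b : ℝ) * I) / (x + (-b : ℝ) * I) =
      (∫ x : ℝ, Φ (x + b * I) / (x + b * I)) + 2 * π * I * Φ 0 := by
  set U : Set ℂ := {z | -(2*b) < z.im ∧ z.im < 2*b} with hU
  have hUo : IsOpen U := (isOpen_lt continuous_const Complex.continuous_im).inter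
    (isOpen_lt Complex.continuous_im continuous_const)
  have h0 : (0 : ℂ) ∈ U := by simp [hU, hb]
  let F : ℂ → ℂ := fun z => dslope Φ 0 z + Φ 0 * (1 / (z + 2 * b * I))
  have hFe : ∀ z, z ≠ 0 → F z = Φ z / z - Φ 0 * (1 / z - 1 / (z + 2 * b * I)) := by
    intro z hz
    simp only [F, dslope_of_ne _ hz, slope_def_field]
    rw [sub_zero]
    ring
  have nz : ∀ x y : ℝ, y ≠ 0 → (x : ℂ) + y * I ≠ 0 := fun x y hy h => hy (by
      have := congrArg Complex.im h; simpa using this)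
  have hFd : DifferentiableOn ℂ F U := by
    refine ((Complex.differentiableOn_dslope (hUo.mem_nhds h0)).2 hΦ).add ?_
    refine DifferentiableOn.const_mul ?_ _
    refine (differentiableOn_const _).div (by fun_prop) ?_
    intro z hz h
    have := congrArg Complex.im h
    simp at this
    linarith [hz.1]
  have g1 : (fun x : ℝ => F (x + (-b : ℝ) * I)) = fun x : ℝ => Φ (x + (-b : ℝ) * I) / (x + (-b : ℝ) * I)
      - Φ 0 * (1 / ((x : ℂ) + (-b : ℝ) * I) - 1 / ((x : ℂ) + (-b : ℝ) * I + 2 * b * I)) :=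
    funext fun x => hFe _ (nz _ _ (by linarith))
  have g2 : (fun x : ℝ => F (x + b * I)) = fun x : ℝ => Φ (x + b * I) / (x + b * I)
      - Φ 0 * (1 / ((x : ℂ) + (b : ℝ) * I) - 1 / ((x : ℂ) + (b : ℝ) * I + 2 * b * I)) :=
    funext fun x => hFe _ (nz _ _ (by linarith))
  have kl := k_lower b hb
  have ku := k_upper b hb
  have := shift_line F (-b) b (by linarith) (hFd.mono (by
      intro z hz; exact ⟨by linarith [hz.1], by linarith [hz.2]⟩))
    (by rw [g1]; exact h1.sub (kl.1.const_mul _)) (by rw [g2]; exact h2.sub (ku.1.const_mul _))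
    (C + 2 * ‖Φ 0‖) (max R 1) ?_
  · rw [g1, g2, integral_sub h1 (kl.1.const_mul _), integral_sub h2 (ku.1.const_mul _),
      integral_const_mul, integral_const_mul, kl.2, ku.2] at this
    linear_combination this
  · intro x hx y hy1 hy2
    have hx1 : 0 < |x| := lt_of_lt_of_le one_pos ((le_max_right _ _).trans hx)
    have n1 : |x| ≤ ‖(x : ℂ) + y * I‖ := by simpa using Complex.abs_re_le_norm ((x : ℂ) + y * I)
    have n2 : |x| ≤ ‖(x : ℂ) + y * I + 2 * b * I‖ := by
      simpa using Complex.abs_re_le_norm ((x : ℂ) + y * I + 2 * b * I)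
    rw [hFe _ (norm_pos_iff.1 (hx1.trans_le n1))]
    have := hC x ((le_max_left _ _).trans hx) y hy1 hy2
    calc _ ≤ C / |x| + ‖Φ 0‖ * (1 / |x| + 1 / |x|) := by
          refine (norm_sub_le _ _).trans (add_le_add this ?_)
          rw [norm_mul]
          gcongr
          refine (norm_sub_le _ _).trans (add_le_add ?_ ?_)
          · rw [norm_div, norm_one]; gcongr
          · rw [norm_div, norm_one]; gcongr
      _ = _ := by ring

lemma sinh_sq_lower (a : ℝ) : a^2 + a^4/4 ≤ Real.sinh a ^ 2 := by
  wlog h : 0 ≤ a generalizing a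
  · have := this (-a) (by linarith)
    have e : (-a)^4 = a^4 := by ring
    simpa [Real.sinh_neg, e] using this
  have h1 : a/2 ≤ Real.sinh (a/2) := Real.self_le_sinh_iff.2 (by linarith)
  have h2 : a/4 ≤ Real.sinh (a/4) := Real.self_le_sinh_iff.2 (by linarith)
  have h3 : Real.cosh (a/2) = 1 + 2 * Real.sinh (a/4)^2 := by
    have := Real.cosh_two_mul (a/4)
    rw [Real.cosh_sq] at this
    rw [show a/2 = 2*(a/4) by ring, this]; ring
  have h4 : 1 + a^2/8 ≤ Real.cosh (a/2) := by rw [h3]; nlinarith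
  have h5 : Real.sinh a = 2 * Real.sinh (a/2) * Real.cosh (a/2) := by
    rw [← Real.sinh_two_mul]; congr 1; ring
  have h6 : a * (1 + a^2/8) ≤ Real.sinh a := by
    rw [h5]
    apply mul_le_mul _ h4 (by positivity) (by linarith)
    linarith
  calc a^2 + a^4/4 ≤ (a * (1 + a^2/8))^2 := by nlinarith [sq_nonneg (a^3)]
    _ ≤ _ := by gcongr

lemma norm_sq_cosh (x y : ℝ) : ‖Complex.cosh (x + y * I)‖^2 = Real.sinh x ^ 2 + Real.cos y ^ 2 := by
  rw [Complex.cosh_add, Complex.cosh_mul_I, Complex.sinh_mul_I, ← Complex.ofReal_cosh,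
    ← Complex.ofReal_sinh, ← Complex.ofReal_cos, ← Complex.ofReal_sin, ← Complex.normSq_eq_norm_sq,
    ← Complex.ofReal_mul, ← mul_assoc, ← Complex.ofReal_mul, Complex.normSq_add_mul_I]
  have := Real.cosh_sq x
  have := Real.sin_sq_add_cos_sq y
  nlinarith

lemma norm_sq_sinh (x y : ℝ) : ‖Complex.sinh (x + y * I)‖^2 = Real.sinh x ^ 2 + Real.sin y ^ 2 := by
  rw [Complex.sinh_add, Complex.cosh_mul_I, Complex.sinh_mul_I, ← Complex.ofReal_cosh,
    ← Complex.ofReal_sinh, ← Complex.ofReal_cos, ← Complex.ofReal_sin, ← Complex.normSq_eq_norm_sq,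
    ← Complex.ofReal_mul, ← mul_assoc, ← Complex.ofReal_mul, Complex.normSq_add_mul_I]
  have := Real.cosh_sq x
  have := Real.sin_sq_add_cos_sq y
  nlinarith

lemma cosh_lower (s y : ℝ) : (1 + (π*s*y)^2)/3 ≤ ‖Complex.cosh (π * (s + s * I) * y)‖ := by
  have e : (π : ℂ) * (s + s * I) * y = ((π*s*y : ℝ) : ℂ) + ((π*s*y : ℝ) : ℂ) * I := by
    push_cast; ring
  rw [e]
  set a := π*s*y
  apply le_of_sq_le_sq _ (norm_nonneg _)
  rw [norm_sq_cosh]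
  have h1 := sinh_sq_lower a
  have h2 : Real.sin a ^ 2 ≤ a^2 := by
    rw [sq_le_sq]; exact Real.abs_sin_le_abs
  have := Real.sin_sq_add_cos_sq a
  nlinarith [sq_nonneg (a^2-1)]

lemma cosh_ne (s y : ℝ) : Complex.cosh (π * (s + s * I) * y) ≠ 0 := by
  have := cosh_lower s y
  exact norm_pos_iff.1 (lt_of_lt_of_le (by positivity) this)

lemma inv_cosh_bdd (s y : ℝ) : ‖1 / Complex.cosh (π * (s + s * I) * y)‖ ≤ 3 * (1 + (y * (π * s))^2)⁻¹ := by
  have := cosh_lower s y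
  rw [norm_div, norm_one, ← div_eq_mul_inv, div_le_div_iff₀ (norm_pos_iff.2 (cosh_ne s y)) (by positivity)]
  have e : y * (π * s) = π*s*y := by ring
  rw [e]; linarith

lemma inv_cosh_cont (s : ℝ) : Continuous fun y : ℝ => 1 / Complex.cosh (π * (s + s * I) * y) :=
  continuous_const.div (Complex.continuous_cosh.comp (by fun_prop)) (cosh_ne s)

open MeasureTheory Filter Topology in
lemma inv_cosh_int (s : ℝ) (hs : 0 < s) : Integrable fun y : ℝ => 1 / Complex.cosh (π * (s + s * I) * y) := by
  have : π * s ≠ 0 := by positivity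
  refine ((integrable_inv_one_add_sq.comp_mul_right' this).const_mul 3).mono'
    (inv_cosh_cont s).aestronglyMeasurable (Eventually.of_forall fun y => inv_cosh_bdd s y)

open MeasureTheory Filter Topology in
lemma f_int (s : ℝ) (hs : 0 < s) (w : ℝ) :
    Integrable fun y : ℝ => Complex.exp (-2*π*I*y*w) / Complex.cosh (π * (s + s * I) * y) := by
  have := (inv_cosh_int s hs).bdd_mul (c := 1) (f := fun y : ℝ => Complex.exp (-2*π*I*y*w))
    (by apply Continuous.aestronglyMeasurable; fun_prop) (Eventually.of_forall fun y => by
      have : (-2*π*I*y*w : ℂ) = ((-2*π*y*w : ℝ) : ℂ) * I := by push_cast; ring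
      rw [this, Complex.norm_exp_ofReal_mul_I])
  refine this.congr (Eventually.of_forall fun y => ?_)
  simp only; ring

open MeasureTheory Filter Topology in
lemma ft_sech (s : ℝ) (hs : 0 < s) (hs2 : s^2 = 1/2) (w : ℝ) :
    (s + s * I) * (∫ y : ℝ, Complex.exp (-2*π*I*y*w) / Complex.cosh (π * (s + s * I) * y))
      * Complex.cosh (π * (s - s * I) * w) = 1 := by
  set θ : ℂ := s + s * I with hθ
  have hs2c : (s : ℂ)^2 = 1/2 := by rw [← Complex.ofReal_pow, hs2]; norm_num
  have hθ2 : θ * θ = I := by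
    rw [hθ]; linear_combination (1 + 2 * I + I * I) * hs2c + (1/2 : ℂ) * I_sq
  have hπ : (π : ℂ) ≠ 0 := by exact_mod_cast Real.pi_ne_zero
  have hθ0 : θ ≠ 0 := fun h => by rw [h] at hθ2; simp at hθ2; exact I_ne_zero hθ2.symm
  set f : ℝ → ℂ := fun y => Complex.exp (-2*π*I*y*w) / Complex.cosh (π * θ * y) with hf
  have hfi : Integrable f := f_int s hs w
  set D : ℂ → ℂ := dslope (fun u => Complex.sinh (π * θ * u)) 0 with hD
  have hder : HasDerivAt (fun u => Complex.sinh (π * θ * u)) (π * θ) 0 := by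
    have := ((hasDerivAt_id (0:ℂ)).const_mul (π * θ)).csinh
    simpa using this
  have hD0 : D 0 = π * θ := by rw [hD, dslope_same, hder.deriv]
  have hDne : ∀ u, u ≠ 0 → D u = Complex.sinh (π * θ * u) / u := by
    intro u hu
    rw [hD, dslope_of_ne _ hu, slope_def_field]; simp
  have hDd : Differentiable ℂ D := by
    rw [← differentiableOn_univ]
    refine (Complex.differentiableOn_dslope univ_mem).2 ?_
    exact (Complex.differentiable_sinh.comp (by fun_prop)).differentiableOn
  set b := s/2 with hb
  have hb0 : 0 < b := by positivity
  have hDz : ∀ u : ℂ, -(2*b) < u.im ∧ u.im < 2*b → D u ≠ 0 := by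
    intro u hu h
    by_cases hu0 : u = 0
    · rw [hu0, hD0] at h; exact mul_ne_zero hπ hθ0 h
    · rw [hDne u hu0, div_eq_zero_iff] at h
      have h1 : Complex.sinh (π * θ * u) = 0 := h.resolve_right hu0
      have h2 : Complex.sin (π * θ * u * I) = 0 := by rw [Complex.sin_mul_I, h1, zero_mul]
      obtain ⟨k, hk⟩ := Complex.sin_eq_zero_iff.1 h2
      have h3 : u = -(k * θ) := by
        have : θ * u * I = k := by
          apply mul_left_cancel₀ hπ; linear_combination hk
        linear_combination (-θ) * this - u * I * hθ2 * (-1) + u * I_sq * (-1) * (-1)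
      have h4 : u.im = -(k * s) := by rw [h3, hθ]; simp
      rw [h4] at hu
      have e1 : (k : ℝ) < 1 := by
        by_contra hc; push Not at hc; nlinarith [hu.1]
      have e2 : (-1 : ℝ) < k := by
        by_contra hc; push Not at hc; nlinarith [hu.2]
      have e3 : k = 0 := by
        have : k < 1 := by exact_mod_cast e1
        have : -1 < k := by exact_mod_cast e2
        omega
      rw [e3] at h3; simp at h3; exact hu0 h3
  set Φ : ℂ → ℂ := fun u => Complex.exp (-2*π*I*u*w) / D u with hΦ
  have hΦe : ∀ u, u ≠ 0 → Φ u / u = Complex.exp (-2*π*I*u*w) / Complex.sinh (π * θ * u) := by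
    intro u hu
    simp only [hΦ]
    rw [hDne u hu]
    by_cases h : Complex.sinh (π * θ * u) = 0
    · simp [h]
    · field_simp
  have nz : ∀ x y : ℝ, y ≠ 0 → (x : ℂ) + y * I ≠ 0 := fun x y hy h => hy (by
      have := congrArg Complex.im h; simpa using this)
  have hbc : (b : ℂ) = s / 2 := by rw [hb]; push_cast; rfl
  have g1 : (fun x : ℝ => Φ (x + (-b : ℝ) * I) / (x + (-b : ℝ) * I)) =
      fun x : ℝ => (I * Complex.exp (π * I * θ * w)) * f (x + b) := by
    funext x
    rw [hΦe _ (nz _ _ (by linarith))]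
    simp only [hf]
    have a1 : π * θ * ((x : ℂ) + (-b : ℝ) * I) = π * θ * ((x + b : ℝ) : ℂ) - (π / 2 : ℂ) * I := by
      push_cast; rw [hbc]
      linear_combination (-π/2 : ℂ) * hθ2 + (π * θ / 2 : ℂ) * hθ
    have a2 : -2*π*I*((x : ℂ) + (-b : ℝ) * I)*w = π * I * θ * w + -2*π*I*((x + b : ℝ) : ℂ)*w := by
      push_cast; rw [hbc, hθ]; ring
    rw [a1, a2, Complex.exp_add, Complex.sinh_sub, Complex.cosh_mul_I, Complex.sinh_mul_I,
      Complex.cos_pi_div_two, Complex.sin_pi_div_two]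
    have hc : Complex.cosh (π * θ * ((x + b : ℝ) : ℂ)) ≠ 0 := cosh_ne s (x+b)
    rw [mul_zero, zero_sub, one_mul]
    have := I_ne_zero
    field_simp
    linear_combination (-1 : ℂ) * I_sq
  have g2 : (fun x : ℝ => Φ (x + b * I) / (x + b * I)) =
      fun x : ℝ => (-I * Complex.exp (-(π * I * θ * w))) * f (x - b) := by
    funext x
    rw [hΦe _ (nz _ _ (by linarith))]
    simp only [hf]
    have a1 : π * θ * ((x : ℂ) + b * I) = π * θ * ((x - b : ℝ) : ℂ) + (π / 2 : ℂ) * I := by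
      push_cast; rw [hbc]
      linear_combination (π/2 : ℂ) * hθ2 - (π * θ / 2 : ℂ) * hθ
    have a2 : -2*π*I*((x : ℂ) + b * I)*w = -(π * I * θ * w) + -2*π*I*((x - b : ℝ) : ℂ)*w := by
      push_cast; rw [hbc, hθ]; ring
    rw [a1, a2, Complex.exp_add, Complex.sinh_add, Complex.cosh_mul_I, Complex.sinh_mul_I,
      Complex.cos_pi_div_two, Complex.sin_pi_div_two]
    have hc : Complex.cosh (π * θ * ((x - b : ℝ) : ℂ)) ≠ 0 := cosh_ne s (x-b)
    rw [mul_zero, zero_add, one_mul]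
    have := I_ne_zero
    field_simp
    linear_combination I_sq
  have R := residue_strip Φ b hb0 ?_ ?_ ?_ (Real.exp (2*π*b*|w|) * (2 / (π * s))) s ?_
  · rw [g1, g2, integral_const_mul, integral_const_mul, integral_add_right_eq_self f,
      integral_sub_right_eq_self f] at R
    have hΦ0 : Φ 0 = 1 / (π * θ) := by simp [hΦ, hD0]
    rw [hΦ0] at R
    have hcosh : Complex.cosh (π * (s - s * I) * w) =
        (Complex.exp (π * I * θ * w) + Complex.exp (-(π * I * θ * w))) / 2 := by
      rw [Complex.cosh]
      have : π * I * θ * w = -(π * (s - s * I) * w) := by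
        rw [hθ]; linear_combination (π * s * w) * I_sq
      rw [this, neg_neg, add_comm]
    rw [hcosh]
    have R2 : I * ((Complex.exp (π * I * θ * w) + Complex.exp (-(π * I * θ * w))) * (∫ y, f y)) =
        I * (2 / θ) := by
      have : 2 * π * I * (1 / (π * θ)) = I * (2 / θ) := by field_simp
      rw [this] at R
      linear_combination R
    have R3 := mul_left_cancel₀ I_ne_zero R2
    rw [eq_div_iff hθ0] at R3
    linear_combination (1/2 : ℂ) * R3
  · refine DifferentiableOn.div (by fun_prop) hDd.differentiableOn hDz
  · rw [g1]; exact (hfi.comp_add_right b).const_mul _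
  · rw [g2]; exact (hfi.comp_sub_right b).const_mul _
  · intro x hx y hy1 hy2
    have hx0 : 0 < |x| := hs.trans_le hx
    have hne : (x : ℂ) + y * I ≠ 0 := fun h => by
      have := congrArg Complex.re h; simp at this; simp [this] at hx0
    rw [hΦe _ hne, norm_div]
    have e1 : ‖Complex.exp (-2*π*I*((x : ℂ) + y * I)*w)‖ ≤ Real.exp (2*π*b*|w|) := by
      rw [Complex.norm_exp]
      apply Real.exp_le_exp.2
      have : (-2*π*I*((x : ℂ) + y * I)*w) = ((2*π*y*w : ℝ) : ℂ) + ((-2*π*x*w : ℝ) : ℂ) * I := by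
        push_cast; linear_combination (-2*π*y*w : ℂ) * I_sq
      rw [this]
      have h3 : (((2*π*y*w : ℝ) : ℂ) + ((-2*π*x*w : ℝ) : ℂ) * I).re = 2*π*y*w := by
        rw [Complex.add_re, Complex.re_ofReal_mul, Complex.ofReal_re, Complex.I_re]; ring
      rw [h3]
      have h4 : y * w ≤ b * |w| := by
        calc y * w ≤ |y * w| := le_abs_self _
          _ = |y| * |w| := abs_mul _ _
          _ ≤ _ := by gcongr; exact abs_le.2 ⟨hy1, hy2⟩
      nlinarith [Real.pi_pos]
    have e2 : π * s / 2 * |x| ≤ ‖Complex.sinh (π * θ * ((x : ℂ) + y * I))‖ := by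
      have : π * θ * ((x : ℂ) + y * I) = ((π*s*(x-y) : ℝ) : ℂ) + ((π*s*(x+y) : ℝ) : ℂ) * I := by
        rw [hθ]; push_cast; linear_combination (π * s * y : ℂ) * I_sq
      rw [this]
      apply le_of_sq_le_sq _ (norm_nonneg _)
      rw [norm_sq_sinh]
      have h5 := sinh_sq_lower (π*s*(x-y))
      have h6 : |x| / 2 ≤ |x - y| := by
        have := abs_sub_abs_le_abs_sub x y
        have : |y| ≤ b := abs_le.2 ⟨hy1, hy2⟩
        linarith
      have h7 : (π * s / 2 * |x|)^2 ≤ (π*s*(x-y))^2 := by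
        rw [mul_pow (π * s), ← sq_abs (x-y), ← mul_pow]
        have : 0 < π * s := by positivity
        gcongr ?_ ^ 2
        nlinarith
      have : 0 ≤ (π*s*(x-y))^4 := by positivity
      nlinarith [sq_nonneg (Real.sin (π*s*(x+y)))]
    calc _ ≤ Real.exp (2*π*b*|w|) / (π * s / 2 * |x|) := by gcongr
      _ = _ := by field_simp

open MeasureTheory Filter Topology in
lemma gauss_cosh_int (s : ℝ) (hs : 0 < s) (τ : ℝ) (hτ : 0 < τ) (c : ℂ) :
    Integrable fun y : ℝ => Complex.exp (-(π*τ) * y^2 + c * y + 0) * (1 / Complex.cosh (π * (s + s * I) * y)) := by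
  have h := integrable_cexp_quadratic (b := (π*τ : ℂ)) (by
    rw [← Complex.ofReal_mul, Complex.ofReal_re]; positivity) c 0
  refine h.mul_bdd (c := 3) (inv_cosh_cont s).aestronglyMeasurable (Eventually.of_forall fun y => ?_)
  refine (inv_cosh_bdd s y).trans ?_
  have : (1 + (y * (π * s))^2)⁻¹ ≤ 1 := inv_le_one_of_one_le₀ (by nlinarith [sq_nonneg (y * (π * s))])
  linarith

lemma theta_eq (s : ℝ) (hsd : s = √2/2) : Complex.exp (π * I / 4) = s + s * I := by
  have : (π * I / 4 : ℂ) = ((π/4 : ℝ) : ℂ) * I := by push_cast; ring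
  rw [this, Complex.exp_mul_I, ← Complex.ofReal_cos, ← Complex.ofReal_sin, Real.cos_pi_div_four,
    Real.sin_pi_div_four, hsd]

open MeasureTheory Filter Topology in
lemma mordell_full (s : ℝ) (hs : 0 < s) (hsd : s = √2/2) (z τ : ℝ) (hτ : 0 < τ) :
    mordellH z τ = (s + s * I) * ∫ y : ℝ,
      Complex.exp (-(π*τ) * y^2 + (2 * π * z * (s + s * I)) * y + 0) *
        (1 / Complex.cosh (π * (s + s * I) * y)) := by
  unfold mordellH
  rw [theta_eq s hsd]
  set θ : ℂ := s + s * I with hθ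
  set f : ℝ → ℂ := fun y : ℝ =>
      Complex.exp (-(π*τ) * y^2 + (2 * π * z * θ) * y + 0) * (1 / Complex.cosh (π * θ * y)) with hf
  set g : ℝ → ℂ := fun y : ℝ => Complex.exp (-(π * τ * y ^ 2)) *
        Complex.cosh (2 * π * z * θ * y) / Complex.cosh (π * θ * y) with hg
  have hfi : Integrable f := gauss_cosh_int s hs τ hτ _
  have hfg : ∀ y, f y + f (-y) = 2 * g y := by
    intro y
    simp only [hf, hg]
    have e1 : Complex.cosh (π * θ * ((-y : ℝ) : ℂ)) = Complex.cosh (π * θ * y) := by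
      rw [← Complex.cosh_neg]; congr 1; push_cast; ring
    have e2 : Complex.exp (-(π*τ) * (y:ℂ)^2 + (2 * π * z * θ) * y + 0) =
        Complex.exp (-(π * τ * y ^ 2)) * Complex.exp (2 * π * z * θ * y) := by
      rw [← Complex.exp_add]; congr 1; ring
    have e3 : Complex.exp (-(π*τ) * ((-y : ℝ):ℂ)^2 + (2 * π * z * θ) * ((-y : ℝ):ℂ) + 0) =
        Complex.exp (-(π * τ * y ^ 2)) * Complex.exp (-(2 * π * z * θ * y)) := by
      rw [← Complex.exp_add]; congr 1; push_cast; ring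
    have e4 : Complex.cosh (2 * π * z * θ * y) =
        (Complex.exp (2 * π * z * θ * y) + Complex.exp (-(2 * π * z * θ * y))) / 2 := rfl
    rw [e1, e2, e3, e4]
    ring
  have h1 : ∫ y, f y = (∫ y in Set.Iic (0:ℝ), f y) + ∫ y in Set.Ioi (0:ℝ), f y := by
    rw [← setIntegral_union (Set.Iic_disjoint_Ioi le_rfl) measurableSet_Ioi hfi.integrableOn
      hfi.integrableOn, Set.Iic_union_Ioi, setIntegral_univ]
  have h2 : (∫ y in Set.Iic (0:ℝ), f y) = ∫ y in Set.Ioi (0:ℝ), f (-y) := by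
    rw [integral_comp_neg_Ioi]; simp
  have hfn : Integrable fun y => f (-y) := hfi.comp_neg
  rw [h1, h2, ← integral_add hfn.integrableOn hfi.integrableOn]
  have h3 : (fun y => f (-y) + f y) = fun y => 2 * g y := by
    funext y; rw [add_comm]; exact hfg y
  rw [h3, integral_const_mul]
  ring

open MeasureTheory Filter Topology FourierTransform in
theorem mordell_modular_aux (z τ : ℝ) (hτ : 0 < τ) :
    mordellH z τ =
      1 / Real.sqrt τ *
        Complex.exp (Real.pi * Complex.I / 4 + Real.pi * Complex.I * z ^ 2 / τ) *
          (starRingEnd ℂ) (mordellH (z / τ) (1 / τ)) := by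
  obtain ⟨s, hsd⟩ : ∃ s : ℝ, s = √2/2 := ⟨_, rfl⟩
  have hs : 0 < s := by rw [hsd]; positivity
  have hs2 : s^2 = 1/2 := by rw [hsd, div_pow, Real.sq_sqrt (by norm_num)]; norm_num
  rw [Complex.exp_add, mordell_full s hs hsd z τ hτ, mordell_full s hs hsd _ _ (one_div_pos.2 hτ),
    theta_eq s hsd, map_mul, ← integral_conj]
  have hs2c : (s : ℂ)^2 = 1/2 := by rw [← Complex.ofReal_pow, hs2]; norm_num
  have hτc : (τ : ℂ) ≠ 0 := by exact_mod_cast hτ.ne'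
  have hcθ : (starRingEnd ℂ) (s + s * I) = s - s * I := by simp [sub_eq_add_neg]
  rw [hcθ]
  set θ : ℂ := s + s * I with hθ
  set θ' : ℂ := s - s * I with hθ'
  have hθθ' : θ * θ' = 1 := by rw [hθ, hθ']; linear_combination (1 - I * I) * hs2c - (1/2:ℂ) * I_sq
  have hθ2 : θ' * θ' = -I := by
    rw [hθ']; linear_combination (1 - 2 * I + I * I) * hs2c + (1/2 : ℂ) * I_sq
  have hIθ : I * θ' = θ := by rw [hθ, hθ']; linear_combination (-s : ℂ) * I_sq
  set G : ℝ → ℂ := fun y => 1 / Complex.cosh (π * θ * y) with hG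
  have hGi : Integrable G := inv_cosh_int s hs
  have hFG : ∀ w, 𝓕 G w = θ' * (1 / Complex.cosh (π * θ' * w)) := by
    intro w
    have h := ft_sech s hs hs2 w
    rw [← hθ, ← hθ'] at h
    rw [Real.fourier_real_eq_integral_exp_smul]
    have e : (fun v : ℝ => Complex.exp (((-2 * π * v * w : ℝ) : ℂ) * I) • G v) =
      fun y : ℝ => Complex.exp (-2*π*I*y*w) / Complex.cosh (π * θ * y) := by
      funext v
      simp only [hG, smul_eq_mul]
      rw [mul_one_div]; congr 2; push_cast; ring
    rw [e]
    set J := ∫ y : ℝ, Complex.exp (-2*π*I*y*w) / Complex.cosh (π * θ * y)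
    have hc : Complex.cosh (π * θ' * w) ≠ 0 := fun h0 => by rw [h0] at h; simp at h
    rw [mul_one_div, eq_div_iff hc]
    linear_combination θ' * h - J * Complex.cosh (π * θ' * w) * hθθ'
  set c : ℂ := z * θ' / τ with hc
  set φ : ℝ → ℂ := fun x : ℝ => Complex.exp (-π * ((1/τ : ℝ) : ℂ) * x ^ 2 + 2 * π * c * x) with hφ
  have hφi : Integrable φ := by
    have := integrable_cexp_quadratic (b := (π*(1/τ : ℝ) : ℂ)) (by
      rw [← Complex.ofReal_mul, Complex.ofReal_re]; positivity) (2 * π * c) 0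
    refine this.congr (Eventually.of_forall fun x => ?_)
    simp only [hφ]; congr 1; ring
  have hFφ : 𝓕 φ = fun t : ℝ =>
    1 / ((1/τ : ℝ) : ℂ) ^ (1 / 2 : ℂ) * Complex.exp (-π / ((1/τ : ℝ) : ℂ) * (t + I * c) ^ 2) :=
    fourier_gaussian_pi' (by rw [Complex.ofReal_re]; positivity) c
  have hsq : (((1/τ : ℝ) : ℂ) ^ (1 / 2 : ℂ)) = 1 / (√τ : ℝ) := by
    have : (1 / 2 : ℂ) = ((1/2 : ℝ) : ℂ) := by push_cast; rfl
    rw [this, ← Complex.ofReal_cpow (by positivity), ← Real.sqrt_eq_rpow, Real.sqrt_div zero_le_one,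
      Real.sqrt_one]
    push_cast; rfl
  have pars : ∫ ξ, 𝓕 φ ξ • G ξ = ∫ x, φ x • 𝓕 G x := by
    simpa using! (VectorFourier.integral_fourierIntegral_smul_eq_flip (L := innerₗ ℝ)
      Real.continuous_fourierChar continuous_inner hφi hGi)
  have hsτ : ((√τ : ℝ) : ℂ) ≠ 0 := by
    have : √τ ≠ 0 := by positivity
    exact_mod_cast this
  have L : ∫ ξ, 𝓕 φ ξ • G ξ = (√τ : ℝ) * Complex.exp (-(π * I * z ^ 2 / τ)) *
      ∫ y : ℝ, Complex.exp (-(π*τ) * y^2 + (2 * π * (-z : ℝ) * θ) * (y : ℂ) + 0) * (1 / Complex.cosh (π * θ * y)) := by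
    rw [← integral_const_mul]
    congr 1
    funext y
    rw [hFφ, hsq]
    simp only [hG, smul_eq_mul]
    have e5 : Complex.exp (-π / ((1/τ : ℝ) : ℂ) * (y + I * c) ^ 2) =
        Complex.exp (-(π * I * z ^ 2 / τ)) *
          Complex.exp (-(π*τ) * y^2 + (2 * π * (-z : ℝ) * θ) * (y : ℂ) + 0) := by
      rw [← Complex.exp_add]
      congr 1
      have : I * c = z * θ / τ := by rw [hc, ← hIθ]; ring
      have h2 : θ * θ = I := by rw [← hIθ]; linear_combination I * I * hθ2 - I * I_sq
      rw [this]
      push_cast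
      field_simp
      linear_combination (-π * z^2) * h2
    rw [one_div_one_div, e5]
    ring
  have hneg : ∫ y : ℝ, Complex.exp (-(π*τ) * y^2 + (2 * π * (-z : ℝ) * θ) * (y : ℂ) + 0) * (1 / Complex.cosh (π * θ * y))
     = ∫ y : ℝ, Complex.exp (-(π*τ) * y^2 + (2 * π * z * θ) * (y : ℂ) + 0) * (1 / Complex.cosh (π * θ * y)) := by
    rw [← integral_neg_eq_self]
    congr 1
    funext y
    congr 2
    · congr 1; push_cast; ring
    · rw [← Complex.cosh_neg]; congr 1; push_cast; ring
  have R : ∫ x, φ x • 𝓕 G x = θ' * ∫ y : ℝ, (starRingEnd ℂ) (Complex.exp (-(π*(1/τ : ℝ)) * y^2 + (2 * π * (z/τ : ℝ) * θ) * (y : ℂ) + 0) * (1 / Complex.cosh (π * θ * y))) := by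
    rw [← integral_const_mul]
    congr 1
    funext y
    rw [hFG]
    simp only [hφ, smul_eq_mul]
    rw [map_mul, map_div₀, map_one, ← Complex.exp_conj, ← Complex.cosh_conj]
    simp only [map_add, map_mul, map_neg, map_pow, Complex.conj_ofReal, map_zero, hcθ, map_ofNat]
    rw [mul_left_comm]
    congr 3
    rw [hc]; push_cast; ring
  rw [L, hneg, R] at pars
  have hE : Complex.exp (-(π * I * z ^ 2 / τ)) * Complex.exp (π * I * z ^ 2 / τ) = 1 := by
    rw [← Complex.exp_add, neg_add_cancel, Complex.exp_zero]
  set E := Complex.exp (π * I * z ^ 2 / τ)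
  set E' := Complex.exp (-(π * I * z ^ 2 / τ))
  set A := ∫ y : ℝ, Complex.exp (-(π*τ) * y^2 + (2 * π * z * θ) * (y : ℂ) + 0) * (1 / Complex.cosh (π * θ * y))
  have hA : A = 1 / (√τ : ℝ) * E * ((√τ : ℝ) * E' * A) := by
    field_simp
    linear_combination (-A) * hE
  rw [hA, pars]
  ring

/-- h(z, −σ) for σ > 0 is defined as the complex conjugate of h(z, σ). -/
theorem mordell_modular (z τ : ℝ) (hτ : 0 < τ) :
    mordellH z τ =
      1 / Real.sqrt τ *
        Complex.exp (Real.pi * Complex.I / 4 + Real.pi * Complex.I * z ^ 2 / τ) *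
          (starRingEnd ℂ) (mordellH (z / τ) (1 / τ)) := by
  exact mordell_modular_aux z τ hτ
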